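/- In the algebra SLF(Ū_q) with convolution product, for every 1 ≤ s ≤ p−1 one has [s] · (χ^+_2 G_s) = [s−1] G_{s−1} + [s+1] G_{s+1}, with the conventions G_0 = 0 and G_p = 0. Explicitly: χ^+_2 G_1 = [2] G_2; χ^+_2 G_s = ([s−1]/[s]) G_{s−1} + ([s+1]/[s]) G_{s+1} for 2 ≤ s ≤ p−2; and χ^+_2 G_{p−1} = [2] G_{p−2}. -/

import Mathlib

noncomputable section

open scoped TensorProduct

namespace Uqsl2

/-- Generators of the restricted quantum group. -/
inductive gen : Type | E | F | K | Kinv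

/-- The primitive `2p`-th root of unity `q = e^{iπ/p}`. -/
def q (p : ℕ) : ℂ := Complex.exp (Real.pi * Complex.I / p)

/-- The `q`-integer `[n] = (q^n - q^{-n})/(q - q^{-1})`. -/
def qi (p : ℕ) (n : ℤ) : ℂ := (q p ^ n - q p ^ (-n)) / (q p - (q p)⁻¹)

/-- The `q`-factorial `[m]!`. -/
def qfact (p m : ℕ) : ℂ := ∏ i ∈ Finset.range m, qi p (i + 1)

open FreeAlgebra in
/-- The defining relations of `Ū_q(sl₂)`. -/
inductive rel (p : ℕ) : FreeAlgebra ℂ gen → FreeAlgebra ℂ gen → Prop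
  | KKinv : rel p (ι ℂ gen.K * ι ℂ gen.Kinv) 1
  | KinvK : rel p (ι ℂ gen.Kinv * ι ℂ gen.K) 1
  | Ep : rel p (ι ℂ gen.E ^ p) 0
  | Fp : rel p (ι ℂ gen.F ^ p) 0
  | K2p : rel p (ι ℂ gen.K ^ (2 * p)) 1
  | KE : rel p (ι ℂ gen.K * ι ℂ gen.E) (q p ^ 2 • (ι ℂ gen.E * ι ℂ gen.K))
  | KF : rel p (ι ℂ gen.K * ι ℂ gen.F) ((q p ^ 2)⁻¹ • (ι ℂ gen.F * ι ℂ gen.K))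
  | EF : rel p (ι ℂ gen.E * ι ℂ gen.F - ι ℂ gen.F * ι ℂ gen.E)
             ((q p - (q p)⁻¹)⁻¹ • (ι ℂ gen.K - ι ℂ gen.Kinv))

/-- The restricted quantum group `Ū_q(sl₂)`, presented by generators and relations. -/
abbrev Uq (p : ℕ) := RingQuot (rel p)

def EE (p : ℕ) : Uq p := RingQuot.mkAlgHom ℂ (rel p) (FreeAlgebra.ι ℂ gen.E)
def FF (p : ℕ) : Uq p := RingQuot.mkAlgHom ℂ (rel p) (FreeAlgebra.ι ℂ gen.F)
def KK (p : ℕ) : Uq p := RingQuot.mkAlgHom ℂ (rel p) (FreeAlgebra.ι ℂ gen.K)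
def KKinv (p : ℕ) : Uq p := RingQuot.mkAlgHom ℂ (rel p) (FreeAlgebra.ι ℂ gen.Kinv)

/-! ### The simple modules `X^α(s)` as matrix representations -/

/-- Matrix of `K` on `X^α(s)` in the canonical basis. -/
def XK (p : ℕ) (α : ℂ) (s : ℕ) : Matrix (Fin s) (Fin s) ℂ :=
  Matrix.diagonal fun i => α * q p ^ ((s : ℤ) - 1 - 2 * (i : ℕ))

/-- Matrix of `E` on `X^α(s)` in the canonical basis. -/
def XE (p : ℕ) (α : ℂ) (s : ℕ) : Matrix (Fin s) (Fin s) ℂ :=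
  Matrix.of fun i j =>
    if (i : ℕ) + 1 = (j : ℕ) then α * qi p (j : ℕ) * qi p ((s : ℤ) - (j : ℕ)) else 0

/-- Matrix of `F` on `X^α(s)` in the canonical basis. -/
def XF (s : ℕ) : Matrix (Fin s) (Fin s) ℂ :=
  Matrix.of fun i j => if (i : ℕ) = (j : ℕ) + 1 then (1 : ℂ) else 0

/-- The statement that `ρX α s` is the representation on `X^α(s)` for the relevant
values of `α` and `s`. -/
def IsXRep (p : ℕ) (ρX : (α : ℂ) → (s : ℕ) → (Uq p →ₐ[ℂ] Matrix (Fin s) (Fin s) ℂ)) : Prop :=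
  ∀ α : ℂ, (α = 1 ∨ α = -1) → ∀ s : ℕ, 1 ≤ s → s ≤ p →
    ρX α s (KK p) = XK p α s ∧ ρX α s (EE p) = XE p α s ∧ ρX α s (FF p) = XF s

/-! ### The projective modules `P^α(s)` as matrix representations -/

/-- Index for the standard basis `(b_i, x_j, y_k, a_l)` of `P^α(s)`. -/
abbrev PIdx (p s : ℕ) := Fin s ⊕ (Fin (p - s) ⊕ (Fin (p - s) ⊕ Fin s))

/-- Diagonal of the matrix of `K` on `P^α(s)`. -/
def PKdiag (p : ℕ) (α : ℂ) (s : ℕ) : PIdx p s → ℂ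
  | .inl i => α * q p ^ ((s : ℤ) - 1 - 2 * (i : ℕ))
  | .inr (.inl j) => -α * q p ^ ((p : ℤ) - s - 1 - 2 * (j : ℕ))
  | .inr (.inr (.inl k)) => -α * q p ^ ((p : ℤ) - s - 1 - 2 * (k : ℕ))
  | .inr (.inr (.inr l)) => α * q p ^ ((s : ℤ) - 1 - 2 * (l : ℕ))

/-- Matrix of `K` on `P^α(s)` in the standard basis. -/
def PK (p : ℕ) (α : ℂ) (s : ℕ) : Matrix (PIdx p s) (PIdx p s) ℂ :=
  Matrix.diagonal (PKdiag p α s)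

/-- Matrix of `E` on `P^α(s)` in the standard basis. -/
def PE (p : ℕ) (α : ℂ) (s : ℕ) : Matrix (PIdx p s) (PIdx p s) ℂ :=
  Matrix.of fun i j =>
    match i, j with
    | .inl i, .inl j =>
        if (i : ℕ) + 1 = (j : ℕ) then α * qi p (j : ℕ) * qi p ((s : ℤ) - (j : ℕ)) else 0
    | .inr (.inl jx), .inl j => if (j : ℕ) = 0 ∧ (jx : ℕ) + 1 = p - s then 1 else 0
    | .inr (.inr (.inr l)), .inl j => if (l : ℕ) + 1 = (j : ℕ) then 1 else 0
    | .inr (.inl i), .inr (.inl j) =>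
        if (i : ℕ) + 1 = (j : ℕ) then -α * qi p (j : ℕ) * qi p ((p : ℤ) - s - (j : ℕ)) else 0
    | .inr (.inr (.inl i)), .inr (.inr (.inl k)) =>
        if (i : ℕ) + 1 = (k : ℕ) then -α * qi p (k : ℕ) * qi p ((p : ℤ) - s - (k : ℕ)) else 0
    | .inr (.inr (.inr l)), .inr (.inr (.inl k)) =>
        if (k : ℕ) = 0 ∧ (l : ℕ) + 1 = s then 1 else 0
    | .inr (.inr (.inr i)), .inr (.inr (.inr l)) =>
        if (i : ℕ) + 1 = (l : ℕ) then α * qi p (l : ℕ) * qi p ((s : ℤ) - (l : ℕ)) else 0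
    | _, _ => 0

/-- Matrix of `F` on `P^α(s)` in the standard basis. -/
def PF (p s : ℕ) : Matrix (PIdx p s) (PIdx p s) ℂ :=
  Matrix.of fun i j =>
    match i, j with
    | .inl i, .inl j => if (i : ℕ) = (j : ℕ) + 1 then (1 : ℂ) else 0
    | .inr (.inr (.inl k)), .inl j => if (j : ℕ) + 1 = s ∧ (k : ℕ) = 0 then 1 else 0
    | .inr (.inl i), .inr (.inl j) => if (i : ℕ) = (j : ℕ) + 1 then 1 else 0
    | .inr (.inr (.inr l)), .inr (.inl j) => if (j : ℕ) + 1 = p - s ∧ (l : ℕ) = 0 then 1 else 0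
    | .inr (.inr (.inl i)), .inr (.inr (.inl k)) => if (i : ℕ) = (k : ℕ) + 1 then 1 else 0
    | .inr (.inr (.inr i)), .inr (.inr (.inr l)) => if (i : ℕ) = (l : ℕ) + 1 then 1 else 0
    | _, _ => 0

/-- The statement that `ρP α s` is the representation on `P^α(s)` for the relevant
values of `α` and `s`. -/
def IsPRep (p : ℕ)
    (ρP : (α : ℂ) → (s : ℕ) → (Uq p →ₐ[ℂ] Matrix (PIdx p s) (PIdx p s) ℂ)) : Prop :=
  ∀ α : ℂ, (α = 1 ∨ α = -1) → ∀ s : ℕ, 1 ≤ s → s ≤ p - 1 →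
    ρP α s (KK p) = PK p α s ∧ ρP α s (EE p) = PE p α s ∧ ρP α s (FF p) = PF p s

/-! ### Symmetric linear forms, characters, and the forms `G_s` -/

/-- Symmetric linear forms. -/
def IsSLF (p : ℕ) (φ : Uq p →ₗ[ℂ] ℂ) : Prop := ∀ x y : Uq p, φ (x * y) = φ (y * x)

/-- The character of a matrix representation. -/
def chiOf (p : ℕ) {n : Type} [Fintype n] [DecidableEq n]
    (ρ : Uq p →ₐ[ℂ] Matrix n n ℂ) : Uq p →ₗ[ℂ] ℂ :=
  (Matrix.traceLinearMap n ℂ ℂ).comp ρ.toLinearMap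

/-- The matrix entry functional. -/
def entry {n : Type} (i j : n) : Matrix n n ℂ →ₗ[ℂ] ℂ where
  toFun M := M i j
  map_add' _ _ := rfl
  map_smul' _ _ := rfl

/-- The symmetric linear form `G_s = tr H^+_s + tr H^-_{p-s}`. -/
def GOf (p : ℕ)
    (ρP : (α : ℂ) → (s : ℕ) → (Uq p →ₐ[ℂ] Matrix (PIdx p s) (PIdx p s) ℂ))
    (s : ℕ) : Uq p →ₗ[ℂ] ℂ :=
  (∑ i : Fin s,
    (entry (Sum.inr (Sum.inr (Sum.inr i))) (Sum.inl i)).comp (ρP 1 s).toLinearMap) +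
  (∑ j : Fin (p - s),
    (entry (Sum.inr (Sum.inr (Sum.inr j))) (Sum.inl j)).comp (ρP (-1) (p - s)).toLinearMap)

/-! ### Convolution product -/

/-- The convolution product of two linear forms, with respect to a comultiplication `Δ`. -/
def conv (p : ℕ) (Δ : Uq p →ₐ[ℂ] (Uq p ⊗[ℂ] Uq p)) (φ ψ : Uq p →ₗ[ℂ] ℂ) :
    Uq p →ₗ[ℂ] ℂ :=
  (LinearMap.mul' ℂ ℂ).comp ((TensorProduct.map φ ψ).comp Δ.toLinearMap)

/-- The statement that `Δ` is the comultiplication of `Ū_q(sl₂)`. -/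
def IsCoprod (p : ℕ) (Δ : Uq p →ₐ[ℂ] (Uq p ⊗[ℂ] Uq p)) : Prop :=
  Δ (EE p) = 1 ⊗ₜ[ℂ] EE p + EE p ⊗ₜ[ℂ] KK p ∧
  Δ (FF p) = FF p ⊗ₜ[ℂ] 1 + KKinv p ⊗ₜ[ℂ] FF p ∧
  Δ (KK p) = KK p ⊗ₜ[ℂ] KK p ∧
  Δ (KKinv p) = KKinv p ⊗ₜ[ℂ] KKinv p

/-
Each `[s] G_s` commutes with `K`, so it is determined by its values on the monomials `cⁿ Kʲ` in the
Casimir element `c = κ F E + q K + q⁻¹ K⁻¹`, where `κ = (q - q⁻¹)²`. On `P^α(s)` the Casimir has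
Jordan blocks `c b_i = α c_s b_i + κ a_i`, `c a_i = α c_s a_i` with `c_s = q^s + q^{-s}`, so `G_s`
reads off the derivative: `G_s(f(c) Kʲ) = κ f'(c_s) W_s(j)` with a power sum `W_s(j)` of weights.
On the other hand `Δ(c)` acts on `X⁺(2) ⊗ Ū_q` by a 2 × 2 matrix satisfying a Cayley–Hamilton
equation over `ℂ[c]` whose roots at `c = z + z⁻¹` are `q z + (q z)⁻¹` and `q⁻¹ z + (q⁻¹ z)⁻¹`. Hence
`χ⁺₂` sends evaluation at `z` to the sum of the evaluations at `q z` and `q⁻¹ z`; differentiating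
this in `z` at `z = q^s` produces the factors `[s-1]`, `[s]`, `[s+1]`.
-/

section QuantumIntegers

variable {p : ℕ}

lemma q_ne_zero (p : ℕ) : q p ≠ 0 := Complex.exp_ne_zero _

lemma isPrimitiveRoot_q (hp : p ≠ 0) : IsPrimitiveRoot (q p) (2 * p) := by
  convert Complex.isPrimitiveRoot_exp (2 * p) (by positivity) using 1
  rw [q]
  push_cast
  congr 1
  field_simp

lemma isPrimitiveRoot_q_sq (hp : p ≠ 0) : IsPrimitiveRoot (q p ^ 2) p :=
  (isPrimitiveRoot_q hp).pow (by positivity) rfl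

lemma q_pow_self (hp : p ≠ 0) : q p ^ p = -1 := by
  rw [q, ← Complex.exp_nat_mul, mul_div_cancel₀ _ (Nat.cast_ne_zero.2 hp), Complex.exp_pi_mul_I]

lemma q_zpow_sub_zpow_neg_ne_zero {s : ℕ} (h0 : 0 < s) (hs : s < p) :
    q p ^ (s : ℤ) - q p ^ (-(s : ℤ)) ≠ 0 := by
  have hroot := (isPrimitiveRoot_q_sq (by lia)).pow_ne_one_of_pos_of_lt h0.ne' hs
  contrapose! hroot
  rw [zpow_neg, zpow_natCast, sub_eq_zero, ← mul_eq_one_iff_eq_inv₀ (pow_ne_zero _ (q_ne_zero p))]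
    at hroot
  rw [← pow_mul, two_mul, pow_add, hroot]

lemma q_sub_inv_ne_zero (hp : 2 ≤ p) : q p - (q p)⁻¹ ≠ 0 := by
  simpa using q_zpow_sub_zpow_neg_ne_zero one_pos hp

lemma qi_ne_zero {s : ℕ} (h0 : 0 < s) (hs : s < p) : qi p s ≠ 0 :=
  div_ne_zero (q_zpow_sub_zpow_neg_ne_zero h0 hs) (q_sub_inv_ne_zero (by lia))

@[simp]
lemma qi_zero (p : ℕ) : qi p 0 = 0 := by simp [qi]

lemma qi_one (hp : 2 ≤ p) : qi p 1 = 1 := by simp [qi, q_sub_inv_ne_zero hp]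

lemma qi_self_sub (hp : p ≠ 0) (n : ℤ) : qi p (p - n) = qi p n := by
  simp only [qi, neg_sub, zpow_sub₀ (q_ne_zero p), zpow_natCast, q_pow_self hp, zpow_neg]
  ring

lemma q_sub_inv_mul_qi (hp : 2 ≤ p) (n : ℤ) :
    (q p - (q p)⁻¹) * qi p n = q p ^ n - (q p ^ n)⁻¹ := by
  rw [qi, mul_div_cancel₀ _ (q_sub_inv_ne_zero hp), zpow_neg]

/-- The factor `κ = (q - q⁻¹)²` which clears the denominators of the Casimir element. -/
def kappa (p : ℕ) : ℂ := (q p - (q p)⁻¹) ^ 2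

lemma kappa_ne_zero (hp : 2 ≤ p) : kappa p ≠ 0 := pow_ne_zero _ (q_sub_inv_ne_zero hp)

/-- The power sum `∑_{i < p} (q^{s-1-2i})^j`, the trace of `K^j` over the weights of the `b`-vectors
of `P⁺(s)` and `P⁻(p-s)` taken together. -/
def weightSum (p : ℕ) (s : ℤ) (j : ℕ) : ℂ := ∑ i ∈ Finset.range p, (q p ^ (s - 1 - 2 * i)) ^ j

lemma weightSum_add_one (p : ℕ) (s : ℤ) (j : ℕ) :
    weightSum p (s + 1) j = q p ^ j * weightSum p s j := by
  simp only [weightSum, Finset.mul_sum, ← mul_pow, ← zpow_one_add₀ (q_ne_zero p)]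
  ring_nf

lemma weightSum_add_two (hp : p ≠ 0) (s : ℤ) (j : ℕ) :
    weightSum p (s + 2) j = weightSum p s j := by
  have hperiod : q p ^ (s + 2 - 1 - 2 * (p : ℤ)) = q p ^ (s + 2 - 1 - 2 * ((0 : ℕ) : ℤ)) := by
    rw [zpow_sub₀ (q_ne_zero p)]
    norm_cast
    rw [(isPrimitiveRoot_q hp).pow_eq_one, div_one, mul_zero, Nat.cast_zero, sub_zero]
  have hsplit := (Finset.sum_range_succ (fun i : ℕ => (q p ^ (s + 2 - 1 - 2 * i)) ^ j) p).symm.trans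
    (Finset.sum_range_succ' _ p)
  rw [hperiod, add_left_inj] at hsplit
  rw [weightSum, hsplit, weightSum]
  push_cast
  ring_nf

end QuantumIntegers

section Relations

variable {p : ℕ}

lemma KK_mul_KKinv (p : ℕ) : KK p * KKinv p = 1 := by
  simpa only [map_mul, map_one, KK, KKinv] using RingQuot.mkAlgHom_rel ℂ (rel.KKinv (p := p))

lemma KKinv_mul_KK (p : ℕ) : KKinv p * KK p = 1 := by
  simpa only [map_mul, map_one, KK, KKinv] using RingQuot.mkAlgHom_rel ℂ (rel.KinvK (p := p))

lemma EE_pow_self (p : ℕ) : EE p ^ p = 0 := by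
  simpa only [map_pow, map_zero, EE] using RingQuot.mkAlgHom_rel ℂ (rel.Ep (p := p))

lemma FF_pow_self (p : ℕ) : FF p ^ p = 0 := by
  simpa only [map_pow, map_zero, FF] using RingQuot.mkAlgHom_rel ℂ (rel.Fp (p := p))

lemma KK_pow_two_mul (p : ℕ) : KK p ^ (2 * p) = 1 := by
  simpa only [map_pow, map_one, KK] using RingQuot.mkAlgHom_rel ℂ (rel.K2p (p := p))

lemma EE_mul_FF (p : ℕ) :
    EE p * FF p = FF p * EE p + (q p - (q p)⁻¹)⁻¹ • (KK p - KKinv p) := by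
  rw [← sub_eq_iff_eq_add']
  simpa only [map_mul, map_sub, map_smul, EE, FF, KK, KKinv] using
    RingQuot.mkAlgHom_rel ℂ (rel.EF (p := p))

lemma KK_semiconjBy_EE (p : ℕ) : SemiconjBy (KK p) (EE p) (q p ^ 2 • EE p) := by
  rw [SemiconjBy, smul_mul_assoc]
  simpa only [map_mul, map_smul, KK, EE] using RingQuot.mkAlgHom_rel ℂ (rel.KE (p := p))

lemma KK_semiconjBy_FF (p : ℕ) : SemiconjBy (KK p) (FF p) ((q p ^ 2)⁻¹ • FF p) := by
  rw [SemiconjBy, smul_mul_assoc]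
  simpa only [map_mul, map_smul, KK, FF] using RingQuot.mkAlgHom_rel ℂ (rel.KF (p := p))

lemma EE_semiconjBy_KK (p : ℕ) : SemiconjBy (EE p) (KK p) ((q p ^ 2)⁻¹ • KK p) := by
  rw [SemiconjBy, smul_mul_assoc, (KK_semiconjBy_EE p).eq, smul_mul_assoc,
    inv_smul_smul₀ (pow_ne_zero 2 (q_ne_zero p))]

lemma FF_semiconjBy_KK (p : ℕ) : SemiconjBy (FF p) (KK p) (q p ^ 2 • KK p) := by
  rw [SemiconjBy, smul_mul_assoc, (KK_semiconjBy_FF p).eq, smul_mul_assoc,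
    smul_inv_smul₀ (pow_ne_zero 2 (q_ne_zero p))]

lemma semiconjBy_KKinv {x : Uq p} {t : ℂ} (ht : t ≠ 0) (h : SemiconjBy x (KK p) (t • KK p)) :
    SemiconjBy x (KKinv p) (t⁻¹ • KKinv p) := by
  rw [SemiconjBy, smul_mul_assoc, eq_inv_smul_iff₀ ht]
  calc t • (x * KKinv p) = t • (KKinv p * KK p * x * KKinv p) := by
        rw [KKinv_mul_KK, one_mul]
    _ = KKinv p * (t • KK p * x) * KKinv p := by
        simp only [mul_assoc, smul_mul_assoc, mul_smul_comm]
    _ = KKinv p * x := by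
        rw [← h.eq, mul_assoc, mul_assoc, KK_mul_KKinv, mul_one]

lemma EE_semiconjBy_KKinv (p : ℕ) : SemiconjBy (EE p) (KKinv p) (q p ^ 2 • KKinv p) := by
  simpa only [inv_inv] using
    semiconjBy_KKinv (inv_ne_zero (pow_ne_zero 2 (q_ne_zero p))) (EE_semiconjBy_KK p)

lemma FF_semiconjBy_KKinv (p : ℕ) : SemiconjBy (FF p) (KKinv p) ((q p ^ 2)⁻¹ • KKinv p) :=
  semiconjBy_KKinv (pow_ne_zero 2 (q_ne_zero p)) (FF_semiconjBy_KK p)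

lemma KKinv_eq_pow (hp : p ≠ 0) : KKinv p = KK p ^ (2 * p - 1) := by
  have hpow : KK p ^ (2 * p - 1) * KK p = 1 := by
    rw [← pow_succ, Nat.sub_add_cancel (by lia), KK_pow_two_mul]
  exact (left_inv_eq_right_inv hpow (KK_mul_KKinv p)).symm

/-- The Casimir element `c = κ F E + q K + q⁻¹ K⁻¹` of `Ū_q(sl₂)`, normalised to have no
denominators. -/
def casimir (p : ℕ) : Uq p := kappa p • (FF p * EE p) + q p • KK p + (q p)⁻¹ • KKinv p

lemma kappa_smul_FF_mul_EE (p : ℕ) :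
    kappa p • (FF p * EE p) = casimir p - q p • KK p - (q p)⁻¹ • KKinv p := by
  rw [casimir]; abel

lemma kappa_smul_EE_mul_FF (hp : 2 ≤ p) :
    kappa p • (EE p * FF p) = casimir p - (q p)⁻¹ • KK p - q p • KKinv p := by
  have hkappa : kappa p * (q p - (q p)⁻¹)⁻¹ = q p - (q p)⁻¹ := by
    rw [kappa, sq, mul_inv_cancel_right₀ (q_sub_inv_ne_zero hp)]
  rw [EE_mul_FF, smul_add, kappa_smul_FF_mul_EE, smul_smul, hkappa]
  module

lemma casimir_commute_KK (p : ℕ) : Commute (casimir p) (KK p) := by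
  have hFE : Commute (KK p) (FF p * EE p) := by
    have h := (KK_semiconjBy_FF p).mul_right (KK_semiconjBy_EE p)
    rwa [smul_mul_smul_comm, inv_mul_cancel₀ (pow_ne_zero 2 (q_ne_zero p)), one_smul] at h
  have hKinv : Commute (KKinv p) (KK p) := by
    rw [Commute, SemiconjBy, KKinv_mul_KK, KK_mul_KKinv]
  exact ((hFE.symm.smul_left _).add_left ((Commute.refl _).smul_left _)).add_left
    (hKinv.smul_left _)

lemma casimir_commute_EE (hp : 2 ≤ p) : Commute (casimir p) (EE p) := by
  have hq := q_ne_zero p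
  have hassoc : EE p * (kappa p • (FF p * EE p)) = kappa p • (EE p * FF p) * EE p := by
    rw [mul_smul_comm, smul_mul_assoc, mul_assoc]
  rw [kappa_smul_FF_mul_EE, kappa_smul_EE_mul_FF hp] at hassoc
  simp only [mul_sub, sub_mul, mul_smul_comm, (EE_semiconjBy_KK p).eq, (EE_semiconjBy_KKinv p).eq,
    smul_mul_assoc, smul_smul] at hassoc
  rw [show q p * (q p ^ 2)⁻¹ = (q p)⁻¹ by field_simp, show (q p)⁻¹ * q p ^ 2 = q p by field_simp,
    sub_left_inj, sub_left_inj] at hassoc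
  exact hassoc.symm

lemma casimir_commute_FF (hp : 2 ≤ p) : Commute (casimir p) (FF p) := by
  have hq := q_ne_zero p
  have hassoc : FF p * (kappa p • (EE p * FF p)) = kappa p • (FF p * EE p) * FF p := by
    rw [mul_smul_comm, smul_mul_assoc, mul_assoc]
  rw [kappa_smul_FF_mul_EE, kappa_smul_EE_mul_FF hp] at hassoc
  simp only [mul_sub, sub_mul, mul_smul_comm, (FF_semiconjBy_KK p).eq, (FF_semiconjBy_KKinv p).eq,
    smul_mul_assoc, smul_smul] at hassoc
  rw [show q p * (q p ^ 2)⁻¹ = (q p)⁻¹ by field_simp, show (q p)⁻¹ * q p ^ 2 = q p by field_simp,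
    sub_left_inj, sub_left_inj] at hassoc
  exact hassoc.symm

end Relations

section Spanning

variable {p : ℕ}

/-- The span of the monomials `cⁿ Kʲ Eᵐ` and `cⁿ Kʲ Fᵐ`, with the Casimir element `c` in place of
the mixed products `Fᵃ Eᵇ` of the Poincaré–Birkhoff–Witt basis. -/
def casimirSpan (p : ℕ) : Submodule ℂ (Uq p) :=
  Submodule.span ℂ {x | ∃ n j m : ℕ, x = casimir p ^ n * KK p ^ j * EE p ^ m ∨
    x = casimir p ^ n * KK p ^ j * FF p ^ m}

lemma casimir_pow_mul_KK_pow_mul_EE_pow_mem (n j m : ℕ) :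
    casimir p ^ n * KK p ^ j * EE p ^ m ∈ casimirSpan p :=
  Submodule.subset_span ⟨n, j, m, Or.inl rfl⟩

lemma casimir_pow_mul_KK_pow_mul_FF_pow_mem (n j m : ℕ) :
    casimir p ^ n * KK p ^ j * FF p ^ m ∈ casimirSpan p :=
  Submodule.subset_span ⟨n, j, m, Or.inr rfl⟩

lemma mul_mem_casimirSpan {g x : Uq p}
    (hE : ∀ n j m, g * (casimir p ^ n * KK p ^ j * EE p ^ m) ∈ casimirSpan p)
    (hF : ∀ n j m, g * (casimir p ^ n * KK p ^ j * FF p ^ m) ∈ casimirSpan p)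
    (hx : x ∈ casimirSpan p) : g * x ∈ casimirSpan p := by
  have hle : casimirSpan p ≤ (casimirSpan p).comap (LinearMap.mulLeft ℂ g) := by
    refine Submodule.span_le.2 ?_
    rintro _ ⟨n, j, m, rfl | rfl⟩
    exacts [hE n j m, hF n j m]
  exact hle hx

lemma KK_mul_casimir_pow_mul_KK_pow (n j : ℕ) :
    KK p * (casimir p ^ n * KK p ^ j) = casimir p ^ n * KK p ^ (j + 1) := by
  rw [← mul_assoc, ← ((casimir_commute_KK p).pow_left n).eq, mul_assoc, pow_succ']

lemma KK_mul_mem_casimirSpan {x : Uq p} (hx : x ∈ casimirSpan p) : KK p * x ∈ casimirSpan p := by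
  refine mul_mem_casimirSpan (fun n j m => ?_) (fun n j m => ?_) hx <;>
    rw [← mul_assoc, KK_mul_casimir_pow_mul_KK_pow]
  exacts [casimir_pow_mul_KK_pow_mul_EE_pow_mem _ _ _, casimir_pow_mul_KK_pow_mul_FF_pow_mem _ _ _]

lemma KK_pow_mul_mem_casimirSpan {x : Uq p} (hx : x ∈ casimirSpan p) (j : ℕ) :
    KK p ^ j * x ∈ casimirSpan p := by
  induction j with
  | zero => simpa
  | succ j ih => rw [pow_succ', mul_assoc]; exact KK_mul_mem_casimirSpan ih

lemma casimir_mul_mem_casimirSpan {x : Uq p} (hx : x ∈ casimirSpan p) :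
    casimir p * x ∈ casimirSpan p := by
  refine mul_mem_casimirSpan (fun n j m => ?_) (fun n j m => ?_) hx <;>
    rw [← mul_assoc, ← mul_assoc, ← pow_succ']
  exacts [casimir_pow_mul_KK_pow_mul_EE_pow_mem _ _ _, casimir_pow_mul_KK_pow_mul_FF_pow_mem _ _ _]

lemma casimir_pow_mul_mem_casimirSpan {x : Uq p} (hx : x ∈ casimirSpan p) (n : ℕ) :
    casimir p ^ n * x ∈ casimirSpan p := by
  induction n with
  | zero => simpa
  | succ n ih => rw [pow_succ', mul_assoc]; exact casimir_mul_mem_casimirSpan ih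

lemma mul_mem_casimirSpan_of_semiconjBy {g y : Uq p} {t : ℂ} (hc : Commute (casimir p) g)
    (hK : SemiconjBy g (KK p) (t • KK p)) (hy : g * y ∈ casimirSpan p) (n j : ℕ) :
    g * (casimir p ^ n * KK p ^ j * y) ∈ casimirSpan p := by
  have hmove : g * (casimir p ^ n * KK p ^ j * y) =
      t ^ j • (casimir p ^ n * (KK p ^ j * (g * y))) := by
    have hcK := (SemiconjBy.mul_right (hc.symm.pow_right n) (hK.pow_right j)).eq
    rw [← mul_assoc, hcK, smul_pow]
    simp only [mul_assoc, smul_mul_assoc, mul_smul_comm]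
  rw [hmove]
  exact Submodule.smul_mem _ _
    (casimir_pow_mul_mem_casimirSpan (KK_pow_mul_mem_casimirSpan hy j) n)

lemma smul_casimir_sub_mul_mem_casimirSpan (hp : p ≠ 0) {y : Uq p} (hy : y ∈ casimirSpan p)
    (r s t : ℂ) : r • (casimir p - s • KK p - t • KKinv p) * y ∈ casimirSpan p := by
  simp only [KKinv_eq_pow hp, smul_mul_assoc, sub_mul]
  exact Submodule.smul_mem _ _ (Submodule.sub_mem _ (Submodule.sub_mem _
    (casimir_mul_mem_casimirSpan hy) (Submodule.smul_mem _ _ (KK_mul_mem_casimirSpan hy)))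
    (Submodule.smul_mem _ _ (KK_pow_mul_mem_casimirSpan hy _)))

lemma EE_mul_mem_casimirSpan (hp : 2 ≤ p) {x : Uq p} (hx : x ∈ casimirSpan p) :
    EE p * x ∈ casimirSpan p := by
  refine mul_mem_casimirSpan
    (fun n j m => mul_mem_casimirSpan_of_semiconjBy (casimir_commute_EE hp)
      (EE_semiconjBy_KK p) ?_ n j)
    (fun n j m => mul_mem_casimirSpan_of_semiconjBy (casimir_commute_EE hp)
      (EE_semiconjBy_KK p) ?_ n j) hx
  · simpa [pow_succ'] using casimir_pow_mul_KK_pow_mul_EE_pow_mem (p := p) 0 0 (m + 1)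
  · cases m with
    | zero => simpa using casimir_pow_mul_KK_pow_mul_EE_pow_mem (p := p) 0 0 1
    | succ m =>
      rw [pow_succ', ← mul_assoc, ← inv_smul_smul₀ (kappa_ne_zero hp) (EE p * FF p),
        kappa_smul_EE_mul_FF hp]
      exact smul_casimir_sub_mul_mem_casimirSpan (by lia)
        (by simpa using casimir_pow_mul_KK_pow_mul_FF_pow_mem (p := p) 0 0 m) _ _ _

lemma FF_mul_mem_casimirSpan (hp : 2 ≤ p) {x : Uq p} (hx : x ∈ casimirSpan p) :
    FF p * x ∈ casimirSpan p := by
  refine mul_mem_casimirSpan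
    (fun n j m => mul_mem_casimirSpan_of_semiconjBy (casimir_commute_FF hp)
      (FF_semiconjBy_KK p) ?_ n j)
    (fun n j m => mul_mem_casimirSpan_of_semiconjBy (casimir_commute_FF hp)
      (FF_semiconjBy_KK p) ?_ n j) hx
  · cases m with
    | zero => simpa using casimir_pow_mul_KK_pow_mul_FF_pow_mem (p := p) 0 0 1
    | succ m =>
      rw [pow_succ', ← mul_assoc, ← inv_smul_smul₀ (kappa_ne_zero hp) (FF p * EE p),
        kappa_smul_FF_mul_EE]
      exact smul_casimir_sub_mul_mem_casimirSpan (by lia)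
        (by simpa using casimir_pow_mul_KK_pow_mul_EE_pow_mem (p := p) 0 0 m) _ _ _
  · simpa [pow_succ'] using casimir_pow_mul_KK_pow_mul_FF_pow_mem (p := p) 0 0 (m + 1)

lemma casimirSpan_eq_top (hp : 2 ≤ p) : casimirSpan p = ⊤ := by
  have hmul (w : FreeAlgebra ℂ gen) :
      ∀ x ∈ casimirSpan p, RingQuot.mkAlgHom ℂ (rel p) w * x ∈ casimirSpan p := by
    induction w using FreeAlgebra.induction with
    | grade0 r =>
      intro x hx
      rw [AlgHom.commutes, ← Algebra.smul_def]
      exact Submodule.smul_mem _ _ hx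
    | grade1 g =>
      intro x hx
      cases g with
      | E => exact EE_mul_mem_casimirSpan hp hx
      | F => exact FF_mul_mem_casimirSpan hp hx
      | K => exact KK_mul_mem_casimirSpan hx
      | Kinv =>
        change KKinv p * x ∈ casimirSpan p
        rw [KKinv_eq_pow (by lia)]
        exact KK_pow_mul_mem_casimirSpan hx _
    | mul a b ha hb => intro x hx; rw [map_mul, mul_assoc]; exact ha _ (hb _ hx)
    | add a b ha hb => intro x hx; rw [map_add, add_mul]; exact add_mem (ha _ hx) (hb _ hx)
  refine Submodule.eq_top_iff'.2 fun u => ?_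
  obtain ⟨w, rfl⟩ := RingQuot.mkAlgHom_surjective ℂ (rel p) u
  simpa using hmul w 1 (by simpa using casimir_pow_mul_KK_pow_mul_EE_pow_mem (p := p) 0 0 0)

lemma linearMap_apply_eq_zero_of_semiconjBy {φ : Uq p →ₗ[ℂ] ℂ}
    (hφ : ∀ x, φ (KK p * x) = φ (x * KK p)) {y : Uq p} {t : ℂ} (ht : t ≠ 1)
    (hy : SemiconjBy (KK p) y (t • y)) : φ y = 0 := by
  have h : φ y = t * φ y :=
    calc φ y = φ (y * KKinv p * KK p) := by rw [mul_assoc, KKinv_mul_KK, mul_one]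
      _ = φ (KK p * y * KKinv p) := by rw [← hφ, mul_assoc]
      _ = t * φ y := by
        rw [hy.eq, mul_assoc, KK_mul_KKinv, mul_one, map_smul, smul_eq_mul]
  exact (mul_left_eq_self₀.1 h.symm).resolve_left ht

lemma linearMap_apply_mul_pow_eq_zero {φ : Uq p →ₗ[ℂ] ℂ}
    (hφ : ∀ x, φ (KK p * x) = φ (x * KK p)) {z g : Uq p} {t : ℂ} (ht : IsPrimitiveRoot t p)
    (hz : Commute (KK p) z) (hg : SemiconjBy (KK p) g (t • g)) (hpow : g ^ p = 0) {m : ℕ}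
    (hm : m ≠ 0) : φ (z * g ^ m) = 0 := by
  rcases lt_or_ge m p with hmp | hpm
  · refine linearMap_apply_eq_zero_of_semiconjBy hφ (ht.pow_ne_one_of_pos_of_lt hm hmp) ?_
    have h := SemiconjBy.mul_right hz (hg.pow_right m)
    rwa [smul_pow, mul_smul_comm] at h
  · rw [← Nat.add_sub_cancel' hpm, pow_add, hpow, zero_mul, mul_zero, map_zero]

lemma linearMap_ext_of_casimir_pow_mul_KK_pow (hp : 2 ≤ p) {φ ψ : Uq p →ₗ[ℂ] ℂ}
    (hφ : ∀ x, φ (KK p * x) = φ (x * KK p)) (hψ : ∀ x, ψ (KK p * x) = ψ (x * KK p))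
    (h : ∀ n j, φ (casimir p ^ n * KK p ^ j) = ψ (casimir p ^ n * KK p ^ j)) : φ = ψ := by
  have hroot := isPrimitiveRoot_q_sq (p := p) (by lia)
  have hcomm (n j : ℕ) : Commute (KK p) (casimir p ^ n * KK p ^ j) :=
    ((casimir_commute_KK p).symm.pow_right n).mul_right ((Commute.refl _).pow_right j)
  refine LinearMap.ext_on (casimirSpan_eq_top hp) ?_
  rintro _ ⟨n, j, m, rfl | rfl⟩ <;> obtain rfl | hm := eq_or_ne m 0
  · simpa using h n j
  · have hzero {χ : Uq p →ₗ[ℂ] ℂ} (hχ : ∀ x, χ (KK p * x) = χ (x * KK p)) :=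
      linearMap_apply_mul_pow_eq_zero hχ hroot (hcomm n j) (KK_semiconjBy_EE p) (EE_pow_self p) hm
    rw [hzero hφ, hzero hψ]
  · simpa using h n j
  · have hzero {χ : Uq p →ₗ[ℂ] ℂ} (hχ : ∀ x, χ (KK p * x) = χ (x * KK p)) :=
      linearMap_apply_mul_pow_eq_zero hχ hroot.inv (hcomm n j) (KK_semiconjBy_FF p) (FF_pow_self p)
        hm
    rw [hzero hφ, hzero hψ]

end Spanning

section CasimirValue

variable {p : ℕ}

/-- The scalar `q^s + q^{-s}` by which the Casimir element acts on `X⁺(s)`. -/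
def casimirValue (p : ℕ) (s : ℤ) : ℂ := q p ^ s + (q p ^ s)⁻¹

lemma neg_casimirValue_self_sub (hp : p ≠ 0) (s : ℤ) :
    -casimirValue p (p - s) = casimirValue p s := by
  rw [casimirValue, casimirValue, zpow_sub₀ (q_ne_zero p), zpow_natCast, q_pow_self hp]
  field_simp
  ring

lemma kappa_mul_qi_mul_qi_add (hp : 2 ≤ p) (s i : ℤ) :
    kappa p * (qi p i * qi p (s - i)) + q p * q p ^ (s - 1 - 2 * i)
      + (q p)⁻¹ * (q p ^ (s - 1 - 2 * i))⁻¹ = casimirValue p s := by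
  have hq := q_ne_zero p
  have hprod : kappa p * (qi p i * qi p (s - i)) =
      (q p ^ i - (q p ^ i)⁻¹) * (q p ^ (s - i) - (q p ^ (s - i))⁻¹) := by
    rw [← q_sub_inv_mul_qi hp, ← q_sub_inv_mul_qi hp, kappa]
    ring
  rw [hprod, casimirValue, zpow_sub₀ hq s i, zpow_sub₀ hq, zpow_sub₀ hq, mul_comm 2 i, zpow_mul,
    zpow_one]
  field_simp
  norm_cast
  ring

end CasimirValue

section Projective

open Matrix Polynomial

lemma aeval_apply_of_apply_eq_smul_add {R M : Type*} [CommSemiring R] [AddCommMonoid M]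
    [Module R M] {T : Module.End R M} {e : R} {a b : M} (ha : T a = e • a)
    (hb : T b = e • b + a) (f : R[X]) :
    aeval T f b = f.eval e • b + f.derivative.eval e • a := by
  induction f using Polynomial.induction_on with
  | C r => simp
  | add f g hf hg =>
    simp only [map_add, LinearMap.add_apply, hf, hg, eval_add]
    module
  | monomial n r ih =>
    have hstep : (C r * X ^ (n + 1) : R[X]) = X * (C r * X ^ n) := by ring
    rw [hstep, map_mul, aeval_X, Module.End.mul_apply, ih, map_add, map_smul, map_smul, ha, hb]
    simp only [derivative_mul (f := X), eval_mul, eval_add, eval_X, derivative_X, eval_one]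
    module

variable {p : ℕ}

lemma casimir_mulVec {n : Type*} [Fintype n] [DecidableEq n]
    (R : Uq p →ₐ[ℂ] Matrix n n ℂ) {v : n → ℂ} {t : ℂ} (ht : t ≠ 0)
    (hv : R (KK p) *ᵥ v = t • v) :
    R (casimir p) *ᵥ v =
      kappa p • (R (FF p) *ᵥ (R (EE p) *ᵥ v)) + (q p * t + (q p)⁻¹ * t⁻¹) • v := by
  have hinv : R (KKinv p) *ᵥ v = t⁻¹ • v := by
    rw [eq_inv_smul_iff₀ ht, ← mulVec_smul, ← hv, mulVec_mulVec, ← map_mul, KKinv_mul_KK, map_one,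
      one_mulVec]
  simp only [casimir, map_add, map_smul, map_mul, add_mulVec, smul_mulVec, ← mulVec_mulVec, hv,
    hinv]
  module

/-- `R` is the representation on `P^α(s)` in the standard basis `(b_i, x_j, y_k, a_l)`. -/
structure IsProjectiveRep (α : ℂ) {s : ℕ} (R : Uq p →ₐ[ℂ] Matrix (PIdx p s) (PIdx p s) ℂ) :
    Prop where
  map_KK : R (KK p) = PK p α s
  map_EE : R (EE p) = PE p α s
  map_FF : R (FF p) = PF p s

/-- The standard basis vector `b_i` of `P^α(s)`. -/
def basisB {s : ℕ} (i : Fin s) : PIdx p s → ℂ := Pi.single (.inl i) 1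

/-- The standard basis vector `x_j` of `P^α(s)`. -/
def basisX {s : ℕ} (j : Fin (p - s)) : PIdx p s → ℂ := Pi.single (.inr (.inl j)) 1

/-- The standard basis vector `a_l` of `P^α(s)`. -/
def basisA {s : ℕ} (l : Fin s) : PIdx p s → ℂ := Pi.single (.inr (.inr (.inr l))) 1

namespace IsProjectiveRep

variable {α : ℂ} {s : ℕ} {R : Uq p →ₐ[ℂ] Matrix (PIdx p s) (PIdx p s) ℂ}

lemma KK_basisB (h : IsProjectiveRep α R) (i : Fin s) :
    R (KK p) *ᵥ basisB i = (α * q p ^ ((s : ℤ) - 1 - 2 * (i : ℕ))) • basisB i := by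
  rw [h.map_KK, PK, basisB, diagonal_mulVec_single, PKdiag, ← Pi.single_smul, smul_eq_mul]

lemma KK_basisA (h : IsProjectiveRep α R) (l : Fin s) :
    R (KK p) *ᵥ basisA l = (α * q p ^ ((s : ℤ) - 1 - 2 * (l : ℕ))) • basisA l := by
  rw [h.map_KK, PK, basisA, diagonal_mulVec_single, PKdiag, ← Pi.single_smul, smul_eq_mul]

lemma EE_basisB_zero (h : IsProjectiveRep α R) (h0 : 0 < s) (hs : s < p) :
    R (EE p) *ᵥ basisB ⟨0, h0⟩ = basisX ⟨p - s - 1, by lia⟩ := by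
  rw [h.map_EE, basisB, basisX, mulVec_single_one]
  ext k
  rcases k with k | k | k | k
  · simp [PE]
  · have hk : (k : ℕ) + 1 = p - s ↔ (k : ℕ) = p - s - 1 := by lia
    simp [PE, Pi.single_apply, Fin.ext_iff, hk]
  · simp [PE]
  · simp [PE]

lemma EE_basisB_succ (h : IsProjectiveRep α R) (i : ℕ) (hi : i + 1 < s) :
    R (EE p) *ᵥ basisB ⟨i + 1, hi⟩ =
      (α * qi p (i + 1) * qi p (s - (i + 1))) • basisB ⟨i, by lia⟩ + basisA ⟨i, by lia⟩ := by
  rw [h.map_EE, basisB, basisB, basisA, mulVec_single_one]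
  ext k
  rcases k with k | k | k | k <;> simp [PE, Pi.single_apply, Fin.ext_iff]

lemma EE_basisA_zero (h : IsProjectiveRep α R) (h0 : 0 < s) :
    R (EE p) *ᵥ basisA ⟨0, h0⟩ = 0 := by
  rw [h.map_EE, basisA, mulVec_single_one]
  ext k
  rcases k with k | k | k | k <;> simp [PE]

lemma EE_basisA_succ (h : IsProjectiveRep α R) (i : ℕ) (hi : i + 1 < s) :
    R (EE p) *ᵥ basisA ⟨i + 1, hi⟩ =
      (α * qi p (i + 1) * qi p (s - (i + 1))) • basisA ⟨i, by lia⟩ := by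
  rw [h.map_EE, basisA, basisA, mulVec_single_one]
  ext k
  rcases k with k | k | k | k <;> simp [PE, Pi.single_apply, Fin.ext_iff]

lemma FF_basisB (h : IsProjectiveRep α R) (i : ℕ) (hi : i + 1 < s) :
    R (FF p) *ᵥ basisB ⟨i, by lia⟩ = basisB ⟨i + 1, hi⟩ := by
  rw [h.map_FF, basisB, basisB, mulVec_single_one]
  ext k
  rcases k with k | k | k | k <;> simp [PF, Pi.single_apply, Fin.ext_iff, hi.ne]

lemma FF_basisA (h : IsProjectiveRep α R) (i : ℕ) (hi : i + 1 < s) :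
    R (FF p) *ᵥ basisA ⟨i, by lia⟩ = basisA ⟨i + 1, hi⟩ := by
  rw [h.map_FF, basisA, basisA, mulVec_single_one]
  ext k
  rcases k with k | k | k | k <;> simp [PF, Pi.single_apply, Fin.ext_iff]

lemma FF_basisX_last (h : IsProjectiveRep α R) (h0 : 0 < s) (hs : s < p) :
    R (FF p) *ᵥ basisX ⟨p - s - 1, by lia⟩ = basisA ⟨0, h0⟩ := by
  have hlast : p - s - 1 + 1 = p - s := by lia
  rw [h.map_FF, basisX, basisA, mulVec_single_one]
  ext k
  rcases k with k | k | k | k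
  · simp [PF]
  · simp [PF, hlast, k.2.ne]
  · simp [PF]
  · simp [PF, Pi.single_apply, Fin.ext_iff, hlast]

lemma FF_EE_basisB (h : IsProjectiveRep α R) (hs : s < p) (i : Fin s) :
    R (FF p) *ᵥ (R (EE p) *ᵥ basisB i) =
      (α * (qi p (i : ℕ) * qi p (s - (i : ℕ)))) • basisB i + basisA i := by
  obtain ⟨_ | i, hi⟩ := i
  · rw [h.EE_basisB_zero hi hs, h.FF_basisX_last hi hs]
    simp
  · rw [h.EE_basisB_succ i hi, mulVec_add, mulVec_smul, h.FF_basisB i hi, h.FF_basisA i hi]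
    simp [mul_assoc]

lemma FF_EE_basisA (h : IsProjectiveRep α R) (l : Fin s) :
    R (FF p) *ᵥ (R (EE p) *ᵥ basisA l) =
      (α * (qi p (l : ℕ) * qi p (s - (l : ℕ)))) • basisA l := by
  obtain ⟨_ | l, hl⟩ := l
  · rw [h.EE_basisA_zero hl]
    simp
  · rw [h.EE_basisA_succ l hl, mulVec_smul, h.FF_basisA l hl]
    simp [mul_assoc]

lemma casimir_basisB (hp : 2 ≤ p) (h : IsProjectiveRep α R) (hα : α ^ 2 = 1) (hs : s < p)
    (i : Fin s) :
    R (casimir p) *ᵥ basisB i = (α * casimirValue p s) • basisB i + kappa p • basisA i := by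
  have hα0 : α ≠ 0 := by rintro rfl; norm_num at hα
  rw [casimir_mulVec R (mul_ne_zero hα0 (zpow_ne_zero _ (q_ne_zero p))) (h.KK_basisB i),
    h.FF_EE_basisB hs, ← kappa_mul_qi_mul_qi_add hp s (i : ℕ), mul_inv,
    inv_eq_of_mul_eq_one_left (by rwa [← sq] : α * α = 1)]
  module

lemma casimir_basisA (hp : 2 ≤ p) (h : IsProjectiveRep α R) (hα : α ^ 2 = 1) (l : Fin s) :
    R (casimir p) *ᵥ basisA l = (α * casimirValue p s) • basisA l := by
  have hα0 : α ≠ 0 := by rintro rfl; norm_num at hα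
  rw [casimir_mulVec R (mul_ne_zero hα0 (zpow_ne_zero _ (q_ne_zero p))) (h.KK_basisA l),
    h.FF_EE_basisA, ← kappa_mul_qi_mul_qi_add hp s (l : ℕ), mul_inv,
    inv_eq_of_mul_eq_one_left (by rwa [← sq] : α * α = 1)]
  module

lemma aeval_casimir_basisB (hp : 2 ≤ p) (h : IsProjectiveRep α R) (hα : α ^ 2 = 1) (hs : s < p)
    (i : Fin s) (f : ℂ[X]) :
    R (aeval (casimir p) f) *ᵥ basisB i =
      f.eval (α * casimirValue p s) • basisB i
        + (f.derivative.eval (α * casimirValue p s) * kappa p) • basisA i := by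
  have hA : toLinAlgEquiv' (R (casimir p)) (kappa p • basisA i) =
      (α * casimirValue p s) • kappa p • basisA i := by
    rw [toLinAlgEquiv'_apply, mulVec_smul, h.casimir_basisA hp hα, smul_comm]
  have hB := aeval_apply_of_apply_eq_smul_add hA (h.casimir_basisB hp hα hs i) f
  rwa [smul_smul, aeval_algHom_apply, aeval_algHom_apply] at hB

lemma entry_aeval_casimir_mul_KK_pow (hp : 2 ≤ p) (h : IsProjectiveRep α R) (hα : α ^ 2 = 1)
    (hs : s < p) (i : Fin s) (f : ℂ[X]) (j : ℕ) :
    R (aeval (casimir p) f * KK p ^ j) (.inr (.inr (.inr i))) (.inl i) =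
      kappa p * f.derivative.eval (α * casimirValue p s)
        * (α * q p ^ ((s : ℤ) - 1 - 2 * (i : ℕ))) ^ j := by
  have hcol : R (aeval (casimir p) f) (.inr (.inr (.inr i))) (.inl i) =
      (R (aeval (casimir p) f) *ᵥ basisB i) (.inr (.inr (.inr i))) := by
    rw [basisB, mulVec_single_one, col_apply]
  rw [map_mul, map_pow, h.map_KK, PK, diagonal_pow, mul_diagonal, hcol,
    h.aeval_casimir_basisB hp hα hs]
  simp [basisA, basisB, PKdiag, mul_comm]

lemma entry_KK_mul (h : IsProjectiveRep α R) (i : Fin s) (x : Uq p) :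
    R (KK p * x) (.inr (.inr (.inr i))) (.inl i) =
      R (x * KK p) (.inr (.inr (.inr i))) (.inl i) := by
  rw [map_mul, map_mul, h.map_KK, PK, diagonal_mul, mul_diagonal, mul_comm]
  rfl

end IsProjectiveRep

end Projective

section PseudoCharacters

open Polynomial

variable {p : ℕ} {ρP : (α : ℂ) → (s : ℕ) → (Uq p →ₐ[ℂ] Matrix (PIdx p s) (PIdx p s) ℂ)}

lemma IsPRep.isProjectiveRep (hP : IsPRep p ρP) {α : ℂ} (hα : α = 1 ∨ α = -1) {s : ℕ}
    (h0 : 0 < s) (hs : s < p) : IsProjectiveRep α (ρP α s) :=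
  let ⟨hK, hE, hF⟩ := hP α hα s h0 (by lia)
  ⟨hK, hE, hF⟩

lemma GOf_apply (ρP : (α : ℂ) → (s : ℕ) → (Uq p →ₐ[ℂ] Matrix (PIdx p s) (PIdx p s) ℂ)) (s : ℕ)
    (x : Uq p) :
    GOf p ρP s x =
      ∑ i : Fin s, ρP 1 s x (.inr (.inr (.inr i))) (.inl i) +
        ∑ i : Fin (p - s), ρP (-1) (p - s) x (.inr (.inr (.inr i))) (.inl i) := by
  simp only [GOf, LinearMap.add_apply, LinearMap.sum_apply, LinearMap.comp_apply]
  rfl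

lemma GOf_KK_mul (hP : IsPRep p ρP) {s : ℕ} (h0 : 0 < s) (hs : s < p) (x : Uq p) :
    GOf p ρP s (KK p * x) = GOf p ρP s (x * KK p) := by
  simp only [GOf_apply, (hP.isProjectiveRep (.inl rfl) h0 hs).entry_KK_mul,
    (hP.isProjectiveRep (.inr rfl) (by lia : 0 < p - s) (by lia)).entry_KK_mul]

lemma neg_one_mul_q_zpow (hp : p ≠ 0) {s : ℕ} (hs : s ≤ p) (i : ℕ) :
    -1 * q p ^ (((p - s : ℕ) : ℤ) - 1 - 2 * i) = q p ^ ((s : ℤ) - 1 - 2 * ((s + i : ℕ) : ℤ)) := by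
  have hexp : ((p - s : ℕ) : ℤ) - 1 - 2 * i = p + (s - 1 - 2 * ((s + i : ℕ) : ℤ)) := by
    push_cast [hs]; ring
  rw [hexp, zpow_add₀ (q_ne_zero p), zpow_natCast, q_pow_self hp, ← mul_assoc]
  norm_num

lemma GOf_aeval_casimir_mul_KK_pow (hP : IsPRep p ρP) {s : ℕ} (h0 : 0 < s) (hs : s < p)
    (f : ℂ[X]) (j : ℕ) :
    GOf p ρP s (aeval (casimir p) f * KK p ^ j) =
      kappa p * f.derivative.eval (casimirValue p s) * weightSum p s j := by
  have hplus := (hP.isProjectiveRep (.inl rfl) h0 hs).entry_aeval_casimir_mul_KK_pow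
    (by lia) (one_pow 2) hs
  have hminus := (hP.isProjectiveRep (.inr rfl) (by lia : 0 < p - s)
    (by lia)).entry_aeval_casimir_mul_KK_pow (by lia) neg_one_sq (by lia)
  have hvalue : -1 * casimirValue p (p - s : ℕ) = casimirValue p s := by
    rw [Nat.cast_sub hs.le, neg_one_mul, neg_casimirValue_self_sub (by lia)]
  simp only [GOf_apply, hplus, hminus, one_mul, hvalue, neg_one_mul_q_zpow (by lia) hs.le]
  rw [← Finset.mul_sum, ← Finset.mul_sum, ← mul_add,
    Fin.sum_univ_eq_sum_range (fun i => (q p ^ ((s : ℤ) - 1 - 2 * i)) ^ j),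
    Fin.sum_univ_eq_sum_range (fun i => (q p ^ ((s : ℤ) - 1 - 2 * ((s + i : ℕ) : ℤ))) ^ j),
    ← Finset.sum_range_add (fun i => (q p ^ ((s : ℤ) - 1 - 2 * i)) ^ j), Nat.add_sub_cancel' hs.le,
    weightSum]

/-- The form `[s] G_s`. Thanks to the factor `[s]` it vanishes at `s = 0` and `s = p`, whatever the
junk value of `GOf` there. -/
def scaledG (p : ℕ) (ρP : (α : ℂ) → (s : ℕ) → (Uq p →ₐ[ℂ] Matrix (PIdx p s) (PIdx p s) ℂ))
    (s : ℕ) : Uq p →ₗ[ℂ] ℂ :=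
  qi p s • GOf p ρP s

lemma qi_natCast_eq_zero_or (p : ℕ) {s : ℕ} (hs : s ≤ p) : qi p s = 0 ∨ 0 < s ∧ s < p := by
  rcases s.eq_zero_or_pos with rfl | h0
  · simp
  rcases hs.eq_or_lt with rfl | hs
  · left
    simpa using qi_self_sub h0.ne' 0
  · exact .inr ⟨h0, hs⟩

lemma scaledG_KK_mul (hP : IsPRep p ρP) {s : ℕ} (hs : s ≤ p) (x : Uq p) :
    scaledG p ρP s (KK p * x) = scaledG p ρP s (x * KK p) := by
  rcases qi_natCast_eq_zero_or p hs with hqi | ⟨h0, hs⟩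
  · simp [scaledG, hqi]
  · simp only [scaledG, LinearMap.smul_apply, GOf_KK_mul hP h0 hs]

lemma scaledG_aeval_casimir_mul_KK_pow (hP : IsPRep p ρP) {s : ℕ} (hs : s ≤ p) (f : ℂ[X])
    (j : ℕ) :
    scaledG p ρP s (aeval (casimir p) f * KK p ^ j) =
      qi p s * (kappa p * f.derivative.eval (casimirValue p s) * weightSum p s j) := by
  rcases qi_natCast_eq_zero_or p hs with hqi | ⟨h0, hs⟩
  · simp [scaledG, hqi]
  · rw [scaledG, LinearMap.smul_apply, GOf_aeval_casimir_mul_KK_pow hP h0 hs, smul_eq_mul]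

end PseudoCharacters

section TracePolynomials

open Polynomial

lemma eval_dickson_one_mul_add {R : Type*} [CommRing R] (x y : R) :
    ∀ n : ℕ, (dickson 1 (x * y) n).eval (x + y) = x ^ n + y ^ n
  | 0 => by rw [dickson_zero]; norm_num
  | 1 => by simp
  | n + 2 => by
    rw [dickson_add_two, eval_sub, eval_mul, eval_mul, eval_X, eval_C,
      eval_dickson_one_mul_add x y n, eval_dickson_one_mul_add x y (n + 1)]
    ring

lemma hasDerivAt_eval_mul_add_inv {𝕜 : Type*} [NontriviallyNormedField 𝕜] (f : 𝕜[X]) {a z : 𝕜}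
    (ha : a ≠ 0) (hz : z ≠ 0) :
    HasDerivAt (fun w => f.eval (a * w + (a * w)⁻¹))
      (f.derivative.eval (a * z + (a * z)⁻¹) * (a * z - (a * z)⁻¹) / z) z := by
  have hmul : HasDerivAt (fun w => a * w) a z := by simpa using (hasDerivAt_id z).const_mul a
  have hsum : HasDerivAt (fun w => a * w + (a * w)⁻¹) (a + -a / (a * z) ^ 2) z :=
    hmul.add (hmul.inv (mul_ne_zero ha hz))
  refine ((f.hasDerivAt _).comp z hsum).congr_deriv ?_
  field_simp
  ring

variable {p : ℕ}

/-- The polynomial `S_n` with `S_n(c) = x₁ⁿ + x₂ⁿ`, where `x₁` and `x₂` are the roots of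
`x² - (q + q⁻¹) c x + (c² + κ)`. That quadratic annihilates the matrix by which the Casimir element
acts on `X⁺(2) ⊗ Ū_q`. -/
def tracePolynomial (p n : ℕ) : ℂ[X] :=
  (dickson 1 (X ^ 2 + C (kappa p)) n).eval (C (q p + (q p)⁻¹) * X)

@[simp]
lemma tracePolynomial_zero (p : ℕ) : tracePolynomial p 0 = 2 := by
  rw [tracePolynomial, dickson_zero]
  norm_num

@[simp]
lemma tracePolynomial_one (p : ℕ) : tracePolynomial p 1 = C (q p + (q p)⁻¹) * X := by
  simp [tracePolynomial]

lemma tracePolynomial_add_two (p n : ℕ) :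
    tracePolynomial p (n + 2) = C (q p + (q p)⁻¹) * X * tracePolynomial p (n + 1)
      - (X ^ 2 + C (kappa p)) * tracePolynomial p n := by
  simp only [tracePolynomial, dickson_add_two, eval_sub, eval_mul, eval_X, eval_C]

lemma eval_tracePolynomial (p n : ℕ) {z : ℂ} (hz : z ≠ 0) :
    (tracePolynomial p n).eval (z + z⁻¹) =
      (q p * z + (q p * z)⁻¹) ^ n + ((q p)⁻¹ * z + ((q p)⁻¹ * z)⁻¹) ^ n := by
  have hq := q_ne_zero p
  have hsum : (q p + (q p)⁻¹) * (z + z⁻¹) =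
      (q p * z + (q p * z)⁻¹) + ((q p)⁻¹ * z + ((q p)⁻¹ * z)⁻¹) := by
    field_simp
    ring
  have hprod : (z + z⁻¹) ^ 2 + kappa p =
      (q p * z + (q p * z)⁻¹) * ((q p)⁻¹ * z + ((q p)⁻¹ * z)⁻¹) := by
    rw [kappa]
    field_simp
    ring
  rw [tracePolynomial, ← coe_evalRingHom, ← eval₂_at_apply, ← eval_map, map_dickson]
  simp only [coe_evalRingHom, eval_add, eval_mul, eval_pow, eval_C, eval_X]
  rw [hsum, hprod, eval_dickson_one_mul_add]

lemma eval_derivative_tracePolynomial_mul (p n : ℕ) {z : ℂ} (hz : z ≠ 0) :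
    (tracePolynomial p n).derivative.eval (z + z⁻¹) * (z - z⁻¹) =
      (X ^ n : ℂ[X]).derivative.eval (q p * z + (q p * z)⁻¹) * (q p * z - (q p * z)⁻¹)
        + (X ^ n : ℂ[X]).derivative.eval ((q p)⁻¹ * z + ((q p)⁻¹ * z)⁻¹)
          * ((q p)⁻¹ * z - ((q p)⁻¹ * z)⁻¹) := by
  have hleft := hasDerivAt_eval_mul_add_inv (tracePolynomial p n) one_ne_zero hz
  have hright := (hasDerivAt_eval_mul_add_inv (X ^ n : ℂ[X]) (q_ne_zero p) hz).add
    (hasDerivAt_eval_mul_add_inv (X ^ n : ℂ[X]) (inv_ne_zero (q_ne_zero p)) hz)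
  have hderiv := (hleft.congr_of_eventuallyEq ?_).unique hright
  · rwa [← add_div, div_left_inj' hz, one_mul] at hderiv
  · filter_upwards [isOpen_ne.mem_nhds hz] with w hw
    simp [eval_tracePolynomial p n hw]

lemma qi_mul_eval_derivative_tracePolynomial (p n : ℕ) (s : ℤ) :
    qi p s * (tracePolynomial p n).derivative.eval (casimirValue p s) =
      qi p (s + 1) * (X ^ n : ℂ[X]).derivative.eval (casimirValue p (s + 1))
        + qi p (s - 1) * (X ^ n : ℂ[X]).derivative.eval (casimirValue p (s - 1)) := by
  have hq := q_ne_zero p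
  have hderiv := eval_derivative_tracePolynomial_mul p n (zpow_ne_zero s hq)
  rw [← zpow_one_add₀ hq, ← zpow_neg_one (q p), ← zpow_add₀ hq, add_comm 1 s,
    neg_add_eq_sub] at hderiv
  simp only [qi, casimirValue, zpow_neg]
  linear_combination hderiv / (q p - (q p)⁻¹)

end TracePolynomials

section FundamentalTensor

variable {p : ℕ}

/-- The representation `(ρ ⊗ id)` of `Ū_q ⊗ Ū_q`, written as matrices over the right factor. -/
def repTensor {n : Type*} [Fintype n] [DecidableEq n] (ρ : Uq p →ₐ[ℂ] Matrix n n ℂ) :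
    Uq p ⊗[ℂ] Uq p →ₐ[ℂ] Matrix n n (Uq p) :=
  ((matrixEquivTensor n ℂ (Uq p)).symm : Uq p ⊗[ℂ] Matrix n n ℂ →ₐ[ℂ] Matrix n n (Uq p)).comp
    ((Algebra.TensorProduct.comm ℂ (Matrix n n ℂ) (Uq p) : _ →ₐ[ℂ] _).comp
      (Algebra.TensorProduct.map ρ (AlgHom.id ℂ (Uq p))))

lemma repTensor_tmul {n : Type*} [Fintype n] [DecidableEq n] (ρ : Uq p →ₐ[ℂ] Matrix n n ℂ)
    (x y : Uq p) : repTensor ρ (x ⊗ₜ y) = Matrix.of fun i j => ρ x i j • y := by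
  ext i j
  simp [repTensor, Algebra.smul_def, Algebra.commutes]

lemma conv_chiOf_apply {n : Type} [Fintype n] [DecidableEq n] (ρ : Uq p →ₐ[ℂ] Matrix n n ℂ)
    (Δ : Uq p →ₐ[ℂ] Uq p ⊗[ℂ] Uq p) (φ : Uq p →ₗ[ℂ] ℂ) (u : Uq p) :
    conv p Δ (chiOf p ρ) φ u = φ (repTensor ρ (Δ u)).trace := by
  rw [conv, LinearMap.comp_apply, LinearMap.comp_apply, AlgHom.toLinearMap_apply]
  induction Δ u using TensorProduct.induction_on with
  | zero => simp
  | tmul x y => simp [repTensor_tmul, chiOf, Matrix.trace, Finset.sum_mul]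
  | add x y hx hy => simp only [map_add, hx, hy, Matrix.trace_add]

/-- `ρ` is the representation of `Ū_q` on `X⁺(2)`. -/
structure IsFundamentalRep (ρ : Uq p →ₐ[ℂ] Matrix (Fin 2) (Fin 2) ℂ) : Prop where
  map_KK : ρ (KK p) = XK p 1 2
  map_EE : ρ (EE p) = XE p 1 2
  map_FF : ρ (FF p) = XF 2

variable {ρ : Uq p →ₐ[ℂ] Matrix (Fin 2) (Fin 2) ℂ} {Δ : Uq p →ₐ[ℂ] Uq p ⊗[ℂ] Uq p}

lemma IsFundamentalRep.map_KKinv (hρ : IsFundamentalRep ρ) :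
    ρ (KKinv p) = !![(q p)⁻¹, 0; 0, q p] := by
  have hq := q_ne_zero p
  have hinv : ρ (KK p) * !![(q p)⁻¹, 0; 0, q p] = 1 := by
    rw [hρ.map_KK]
    ext i j
    fin_cases i <;> fin_cases j <;> simp [XK, Matrix.mul_apply, hq]
  refine left_inv_eq_right_inv ?_ hinv
  rw [← map_mul, KKinv_mul_KK, map_one]

lemma repTensor_coprod_KK_pow (hρ : IsFundamentalRep ρ) (hΔ : IsCoprod p Δ) (j : ℕ) :
    repTensor ρ (Δ (KK p ^ j)) = !![q p ^ j • KK p ^ j, 0; 0, (q p)⁻¹ ^ j • KK p ^ j] := by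
  rw [map_pow, hΔ.2.2.1, Algebra.TensorProduct.tmul_pow, repTensor_tmul, map_pow, hρ.map_KK, XK,
    Matrix.diagonal_pow]
  ext i j
  fin_cases i <;> fin_cases j <;> simp

lemma repTensor_coprod_KK (hρ : IsFundamentalRep ρ) (hΔ : IsCoprod p Δ) :
    repTensor ρ (Δ (KK p)) = !![q p • KK p, 0; 0, (q p)⁻¹ • KK p] := by
  simpa only [pow_one] using repTensor_coprod_KK_pow hρ hΔ 1

lemma repTensor_coprod_KKinv (hρ : IsFundamentalRep ρ) (hΔ : IsCoprod p Δ) :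
    repTensor ρ (Δ (KKinv p)) = !![(q p)⁻¹ • KKinv p, 0; 0, q p • KKinv p] := by
  rw [hΔ.2.2.2, repTensor_tmul, hρ.map_KKinv]
  ext i j
  fin_cases i <;> fin_cases j <;> simp

lemma repTensor_coprod_EE (hp : 2 ≤ p) (hρ : IsFundamentalRep ρ) (hΔ : IsCoprod p Δ) :
    repTensor ρ (Δ (EE p)) = !![EE p, KK p; 0, EE p] := by
  rw [hΔ.1, map_add, repTensor_tmul, repTensor_tmul, hρ.map_EE]
  ext i j
  fin_cases i <;> fin_cases j <;> simp [XE, qi_one hp]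

lemma repTensor_coprod_FF (hρ : IsFundamentalRep ρ) (hΔ : IsCoprod p Δ) :
    repTensor ρ (Δ (FF p)) = !![(q p)⁻¹ • FF p, 0; 1, q p • FF p] := by
  rw [hΔ.2.1, map_add, repTensor_tmul, repTensor_tmul, hρ.map_FF, hρ.map_KKinv]
  ext i j
  fin_cases i <;> fin_cases j <;> simp [XF]

/-- The matrix by which the Casimir element acts on `X⁺(2) ⊗ Ū_q`, with entries in `Ū_q`. -/
def casimirMatrix (p : ℕ) : Matrix (Fin 2) (Fin 2) (Uq p) :=
  !![(q p)⁻¹ • casimir p + (q p ^ 2 - 1) • KK p, (kappa p * (q p)⁻¹) • (FF p * KK p);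
    kappa p • EE p, q p • casimir p + ((q p ^ 2)⁻¹ - 1) • KK p]

lemma repTensor_coprod_casimir (hp : 2 ≤ p) (hρ : IsFundamentalRep ρ) (hΔ : IsCoprod p Δ) :
    repTensor ρ (Δ (casimir p)) = casimirMatrix p := by
  have hq := q_ne_zero p
  nth_rw 1 [casimir]
  simp only [map_add, map_smul, map_mul, repTensor_coprod_KK hρ hΔ, repTensor_coprod_KKinv hρ hΔ,
    repTensor_coprod_EE hp hρ hΔ, repTensor_coprod_FF hρ hΔ]
  rw [casimirMatrix, casimir, kappa]
  rw [← Matrix.ext_iff]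
  simp only [Fin.forall_fin_two, Matrix.add_apply, Matrix.smul_apply, Matrix.of_apply,
    Matrix.mul_fin_two,
    Matrix.cons_val', Matrix.cons_val_zero, Matrix.cons_val_one, Matrix.cons_val_fin_one,
    zero_mul, mul_zero, add_zero, one_mul, smul_zero, smul_mul_assoc]
  refine ⟨⟨?_, ?_⟩, trivial, ?_⟩ <;> match_scalars <;> field_simp <;> ring

lemma kappa_smul_FF_mul_KK_mul_EE (p : ℕ) :
    kappa p • (FF p * KK p * EE p) =
      q p ^ 2 • (casimir p * KK p) - q p ^ 3 • KK p ^ 2 - q p • (1 : Uq p) := by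
  have hq := q_ne_zero p
  have hFKE : FF p * KK p * EE p = q p ^ 2 • (FF p * EE p * KK p) := by
    rw [mul_assoc, (KK_semiconjBy_EE p).eq, smul_mul_assoc, mul_smul_comm, mul_assoc]
  rw [hFKE, smul_comm, ← smul_mul_assoc, kappa_smul_FF_mul_EE]
  simp only [sub_mul, smul_mul_assoc, KKinv_mul_KK, ← sq]
  match_scalars <;> field_simp

lemma kappa_smul_EE_mul_FF_mul_KK (hp : 2 ≤ p) :
    kappa p • (EE p * (FF p * KK p)) =
      casimir p * KK p - (q p)⁻¹ • KK p ^ 2 - q p • (1 : Uq p) := by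
  rw [← mul_assoc, ← smul_mul_assoc, kappa_smul_EE_mul_FF hp]
  simp only [sub_mul, smul_mul_assoc, KKinv_mul_KK, ← sq]

lemma casimirMatrix_sq (hp : 2 ≤ p) :
    casimirMatrix p ^ 2 =
      ((q p + (q p)⁻¹) • casimir p) • casimirMatrix p - (casimir p ^ 2 + kappa p • 1) • 1 := by
  have hq := q_ne_zero p
  have hKc := (casimir_commute_KK p).symm.eq
  have hEc := (casimir_commute_EE hp).symm.eq
  have hFKc := ((casimir_commute_FF hp).mul_right (casimir_commute_KK p)).symm.eq
  have hKE := (KK_semiconjBy_EE p).eq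
  have hKFK : KK p * (FF p * KK p) = (q p ^ 2)⁻¹ • (FF p * KK p * KK p) := by
    rw [← mul_assoc, (KK_semiconjBy_FF p).eq, smul_mul_assoc, smul_mul_assoc]
  have hFKE : (kappa p * (q p)⁻¹) • (FF p * KK p) * kappa p • EE p =
      (kappa p * (q p)⁻¹) • (q p ^ 2 • (casimir p * KK p) - q p ^ 3 • KK p ^ 2
        - q p • (1 : Uq p)) := by
    rw [smul_mul_assoc, mul_smul_comm, kappa_smul_FF_mul_KK_mul_EE]
  have hEFK : kappa p • EE p * (kappa p * (q p)⁻¹) • (FF p * KK p) =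
      (kappa p * (q p)⁻¹) • (casimir p * KK p - (q p)⁻¹ • KK p ^ 2 - q p • (1 : Uq p)) := by
    rw [mul_smul_comm, smul_mul_assoc, kappa_smul_EE_mul_FF_mul_KK hp]
  rw [sq, casimirMatrix, Matrix.one_fin_two, Matrix.mul_fin_two, hFKE, hEFK, ← Matrix.ext_iff]
  simp only [Fin.forall_fin_two, Matrix.sub_apply, Matrix.smul_apply, Matrix.of_apply,
    Matrix.cons_val', Matrix.cons_val_zero, Matrix.cons_val_one, Matrix.cons_val_fin_one,
    smul_eq_mul, mul_one, mul_zero, mul_add, add_mul, smul_mul_assoc, mul_smul_comm,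
    hKc, hEc, hFKc, hKE, hKFK, kappa, sq]
  refine ⟨⟨?_, ?_⟩, ?_, ?_⟩ <;> match_scalars <;> field_simp
  all_goals ring

end FundamentalTensor

section CharacterProduct

open Polynomial

variable {p : ℕ} {ρ : Uq p →ₐ[ℂ] Matrix (Fin 2) (Fin 2) ℂ} {Δ : Uq p →ₐ[ℂ] Uq p ⊗[ℂ] Uq p}

lemma conv_chiOf_KK_mul (hρ : IsFundamentalRep ρ) (hΔ : IsCoprod p Δ) {φ : Uq p →ₗ[ℂ] ℂ}
    (hφ : ∀ x, φ (KK p * x) = φ (x * KK p)) (x : Uq p) :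
    conv p Δ (chiOf p ρ) φ (KK p * x) = conv p Δ (chiOf p ρ) φ (x * KK p) := by
  simp only [conv_chiOf_apply, map_mul, repTensor_coprod_KK hρ hΔ, Matrix.trace_fin_two,
    Matrix.mul_apply, Fin.sum_univ_two, Matrix.of_apply, Matrix.cons_val', Matrix.cons_val_zero,
    Matrix.cons_val_one, Matrix.cons_val_fin_one, zero_mul, mul_zero, add_zero, zero_add,
    smul_mul_assoc, mul_smul_comm, map_add, map_smul, hφ]

lemma conv_smul (Δ : Uq p →ₐ[ℂ] Uq p ⊗[ℂ] Uq p) (χ φ : Uq p →ₗ[ℂ] ℂ) (a : ℂ) :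
    conv p Δ χ (a • φ) = a • conv p Δ χ φ := by
  rw [conv, TensorProduct.map_smul_right, LinearMap.smul_comp, LinearMap.comp_smul, conv]

/-- The matrix by which `K ^ j` acts on `X⁺(2) ⊗ Ū_q`, with entries in `Ū_q`. -/
def weightMatrix (p j : ℕ) : Matrix (Fin 2) (Fin 2) (Uq p) :=
  !![q p ^ j • KK p ^ j, 0; 0, (q p)⁻¹ ^ j • KK p ^ j]

lemma trace_casimirMatrix_mul_weightMatrix (p j : ℕ) :
    (casimirMatrix p * weightMatrix p j).trace =
      (q p ^ j * (q p)⁻¹ + (q p)⁻¹ ^ j * q p) • (casimir p * KK p ^ j)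
        + (q p - (q p)⁻¹) • (q p ^ (j + 1) - (q p)⁻¹ ^ (j + 1)) • KK p ^ (j + 1) := by
  have hq := q_ne_zero p
  simp only [casimirMatrix, weightMatrix, Matrix.trace_fin_two, Matrix.mul_fin_two,
    Matrix.of_apply, Matrix.cons_val', Matrix.cons_val_zero,
    Matrix.cons_val_one, Matrix.cons_val_fin_one, mul_zero, add_zero, zero_add,
    add_mul, smul_mul_assoc, mul_smul_comm, ← pow_succ']
  match_scalars <;> simp only [pow_succ, inv_pow] <;> field_simp
  ring

lemma trace_casimirMatrix_pow_add_two_mul (hp : 2 ≤ p) (n j : ℕ) :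
    (casimirMatrix p ^ (n + 2) * weightMatrix p j).trace =
      (q p + (q p)⁻¹) • (casimir p * (casimirMatrix p ^ (n + 1) * weightMatrix p j).trace)
        - (casimir p ^ 2 + kappa p • 1) * (casimirMatrix p ^ n * weightMatrix p j).trace := by
  rw [pow_add, (Commute.pow_pow_self _ _ _).eq, casimirMatrix_sq hp, sub_mul, smul_mul_assoc,
    smul_mul_assoc, one_mul, ← pow_succ', sub_mul, smul_mul_assoc, smul_mul_assoc,
    Matrix.trace_sub, Matrix.trace_smul, Matrix.trace_smul, smul_eq_mul, smul_eq_mul,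
    smul_mul_assoc]

lemma map_aeval_mul_trace_casimirMatrix_pow (hp : 2 ≤ p) {φ : Uq p →ₗ[ℂ] ℂ}
    (hφ : ∀ (f : ℂ[X]) (j : ℕ), (q p)⁻¹ ^ j * φ (aeval (casimir p) f * KK p ^ j) =
      q p ^ j * φ (aeval (casimir p) f * KK p ^ j)) (f : ℂ[X]) (j : ℕ) :
    ∀ n, φ (aeval (casimir p) f * (casimirMatrix p ^ n * weightMatrix p j).trace) =
      q p ^ j * φ (aeval (casimir p) (f * tracePolynomial p n) * KK p ^ j)
  | 0 => by
    have hφj := hφ f j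
    simp only [pow_zero, one_mul, weightMatrix, Matrix.trace_fin_two_of, mul_add, mul_smul_comm,
      map_add, map_smul, smul_eq_mul, tracePolynomial_zero, mul_two, add_mul, hφj]
  | 1 => by
    have hφj := hφ (f * X) j
    have hφj' := hφ f (j + 1)
    rw [pow_one, trace_casimirMatrix_mul_weightMatrix, tracePolynomial_one,
      mul_left_comm f, ← smul_eq_C_mul, map_smul, smul_mul_assoc]
    simp only [mul_add, mul_smul_comm, map_add, map_smul, ← mul_assoc, map_mul, aeval_X,
      smul_eq_mul] at hφj hφj' ⊢
    linear_combination q p * hφj - (q p - (q p)⁻¹) * hφj'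
  | n + 2 => by
    have h1 := map_aeval_mul_trace_casimirMatrix_pow hp hφ (f * X) j (n + 1)
    have h0 := map_aeval_mul_trace_casimirMatrix_pow hp hφ (f * (X ^ 2 + C (kappa p))) j n
    have hS : f * tracePolynomial p (n + 2) =
        (q p + (q p)⁻¹) • (f * X * tracePolynomial p (n + 1))
          - f * (X ^ 2 + C (kappa p)) * tracePolynomial p n := by
      rw [tracePolynomial_add_two, smul_eq_C_mul]
      ring
    have haeval : aeval (casimir p) (X ^ 2 + C (kappa p)) = casimir p ^ 2 + kappa p • 1 := by
      simp [Algebra.smul_def]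
    rw [map_mul (aeval _), haeval] at h0
    rw [map_mul (aeval _), aeval_X] at h1
    rw [trace_casimirMatrix_pow_add_two_mul hp, hS, mul_sub, mul_smul_comm, ← mul_assoc,
      ← mul_assoc, map_sub, map_smul, h0, h1, map_sub, map_smul, sub_mul, smul_mul_assoc, map_sub,
      map_smul, smul_eq_mul, smul_eq_mul]
    ring

lemma conv_chiOf_casimir_pow_mul_KK_pow (hp : 2 ≤ p) (hρ : IsFundamentalRep ρ)
    (hΔ : IsCoprod p Δ) {φ : Uq p →ₗ[ℂ] ℂ}
    (hφ : ∀ (f : ℂ[X]) (j : ℕ), (q p)⁻¹ ^ j * φ (aeval (casimir p) f * KK p ^ j) =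
      q p ^ j * φ (aeval (casimir p) f * KK p ^ j)) (n j : ℕ) :
    conv p Δ (chiOf p ρ) φ (casimir p ^ n * KK p ^ j) =
      q p ^ j * φ (aeval (casimir p) (tracePolynomial p n) * KK p ^ j) := by
  have htrace := map_aeval_mul_trace_casimirMatrix_pow hp hφ 1 j n
  rw [map_one, one_mul, one_mul] at htrace
  rw [conv_chiOf_apply, map_mul, map_mul, map_pow, map_pow, repTensor_coprod_casimir hp hρ hΔ,
    repTensor_coprod_KK_pow hρ hΔ, ← weightMatrix, htrace]

variable {ρP : (α : ℂ) → (s : ℕ) → (Uq p →ₐ[ℂ] Matrix (PIdx p s) (PIdx p s) ℂ)}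

lemma q_pow_mul_q_pow_mul_weightSum (hp : p ≠ 0) (s : ℤ) (j : ℕ) :
    q p ^ j * (q p ^ j * weightSum p s j) = weightSum p s j := by
  rw [← weightSum_add_one, ← weightSum_add_one, add_assoc, one_add_one_eq_two,
    weightSum_add_two hp]

lemma inv_q_pow_mul_weightSum (hp : p ≠ 0) (s : ℤ) (j : ℕ) :
    (q p)⁻¹ ^ j * weightSum p s j = q p ^ j * weightSum p s j := by
  rw [inv_pow, inv_mul_eq_iff_eq_mul₀ (pow_ne_zero _ (q_ne_zero p)),
    q_pow_mul_q_pow_mul_weightSum hp]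

theorem conv_chiOf_scaledG (hρ : IsFundamentalRep ρ) (hP : IsPRep p ρP) (hΔ : IsCoprod p Δ)
    {t : ℕ} (ht : t + 2 ≤ p) :
    conv p Δ (chiOf p ρ) (scaledG p ρP (t + 1)) = scaledG p ρP t + scaledG p ρP (t + 2) := by
  have hp : 2 ≤ p := by lia
  have hp₀ : p ≠ 0 := by lia
  have ht₀ : t ≤ p := by lia
  have ht₁ : t + 1 ≤ p := by lia
  refine linearMap_ext_of_casimir_pow_mul_KK_pow hp
    (conv_chiOf_KK_mul hρ hΔ fun x => scaledG_KK_mul hP ht₁ x) (fun x => ?_) fun n j => ?_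
  · rw [LinearMap.add_apply, LinearMap.add_apply, scaledG_KK_mul hP ht₀, scaledG_KK_mul hP ht]
  have hweight (f : ℂ[X]) (j : ℕ) :
      (q p)⁻¹ ^ j * scaledG p ρP (t + 1) (aeval (casimir p) f * KK p ^ j) =
        q p ^ j * scaledG p ρP (t + 1) (aeval (casimir p) f * KK p ^ j) := by
    rw [scaledG_aeval_casimir_mul_KK_pow hP ht₁]
    linear_combination qi p ↑(t + 1) * kappa p * f.derivative.eval (casimirValue p ↑(t + 1)) *
      inv_q_pow_mul_weightSum hp₀ ↑(t + 1) j
  have hcasimir : casimir p ^ n = aeval (casimir p) (X ^ n : ℂ[X]) := by rw [map_pow, aeval_X]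
  have hroots := qi_mul_eval_derivative_tracePolynomial p n (t + 1)
  rw [add_sub_cancel_right, add_assoc, one_add_one_eq_two] at hroots
  rw [conv_chiOf_casimir_pow_mul_KK_pow hp hρ hΔ hweight, LinearMap.add_apply, hcasimir,
    scaledG_aeval_casimir_mul_KK_pow hP ht₀, scaledG_aeval_casimir_mul_KK_pow hP ht₁,
    scaledG_aeval_casimir_mul_KK_pow hP ht]
  push_cast
  rw [weightSum_add_one, weightSum_add_two hp₀]
  linear_combination kappa p * weightSum p t j * hroots
    + qi p (t + 1) * kappa p * (tracePolynomial p n).derivative.eval (casimirValue p (t + 1))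
      * q_pow_mul_q_pow_mul_weightSum hp₀ t j

theorem qi_smul_conv_chiOf_GOf (hρ : IsFundamentalRep ρ) (hP : IsPRep p ρP) (hΔ : IsCoprod p Δ)
    {s : ℕ} (h0 : 1 ≤ s) (hs : s < p) :
    qi p s • conv p Δ (chiOf p ρ) (GOf p ρP s) =
      qi p (s - 1) • GOf p ρP (s - 1) + qi p (s + 1) • GOf p ρP (s + 1) := by
  obtain ⟨t, rfl⟩ := Nat.exists_eq_add_of_le' h0
  have hG := conv_chiOf_scaledG hρ hP hΔ (t := t) (by lia)
  rw [scaledG, scaledG, scaledG, conv_smul] at hG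
  simpa [add_assoc, one_add_one_eq_two] using hG

end CharacterProduct

/-- in `SLF(Ū_q)`, `[s]·(χ^+_2 G_s) = [s-1] G_{s-1} + [s+1] G_{s+1}`
(with the conventions `G_0 = 0`, `G_p = 0`, here automatic since `[0] = [p] = 0`);
explicitly `χ^+_2 G_1 = [2] G_2`, `χ^+_2 G_s = ([s-1]/[s]) G_{s-1} + ([s+1]/[s]) G_{s+1}`
for `2 ≤ s ≤ p-2`, and `χ^+_2 G_{p-1} = [2] G_{p-2}`. -/
theorem statement_13 (p : ℕ) (hp : 2 ≤ p)
    (ρX : (α : ℂ) → (s : ℕ) → (Uq p →ₐ[ℂ] Matrix (Fin s) (Fin s) ℂ))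
    (hX : IsXRep p ρX)
    (ρP : (α : ℂ) → (s : ℕ) → (Uq p →ₐ[ℂ] Matrix (PIdx p s) (PIdx p s) ℂ))
    (hP : IsPRep p ρP)
    (Δ : Uq p →ₐ[ℂ] (Uq p ⊗[ℂ] Uq p)) (hΔ : IsCoprod p Δ) :
    (∀ s : ℕ, 1 ≤ s → s ≤ p - 1 →
      qi p s • conv p Δ (chiOf p (ρX 1 2)) (GOf p ρP s) =
        qi p ((s : ℤ) - 1) • GOf p ρP (s - 1) + qi p ((s : ℤ) + 1) • GOf p ρP (s + 1))
    ∧ conv p Δ (chiOf p (ρX 1 2)) (GOf p ρP 1) = qi p 2 • GOf p ρP 2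
    ∧ (∀ s : ℕ, 2 ≤ s → s ≤ p - 2 →
        conv p Δ (chiOf p (ρX 1 2)) (GOf p ρP s) =
          (qi p ((s : ℤ) - 1) / qi p s) • GOf p ρP (s - 1)
            + (qi p ((s : ℤ) + 1) / qi p s) • GOf p ρP (s + 1))
    ∧ conv p Δ (chiOf p (ρX 1 2)) (GOf p ρP (p - 1)) = qi p 2 • GOf p ρP (p - 2) := by
  have hρ : IsFundamentalRep (ρX 1 2) :=
    let ⟨hK, hE, hF⟩ := hX 1 (Or.inl rfl) 2 (by lia) hp
    ⟨hK, hE, hF⟩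
  have main (s : ℕ) (h0 : 1 ≤ s) (hs : s < p) := qi_smul_conv_chiOf_GOf hρ hP hΔ h0 hs
  refine ⟨fun s h0 hs => main s h0 (by lia), ?_, fun s h0 hs => ?_, ?_⟩
  · simpa [qi_one hp, one_add_one_eq_two] using main 1 le_rfl hp
  · have hqi : qi p s ≠ 0 := qi_ne_zero (by lia) (by lia)
    rw [← inv_smul_smul₀ hqi (conv _ _ _ _), main s (by lia) (by lia)]
    simp only [smul_add, smul_smul, inv_mul_eq_div]
  · have hlast := main (p - 1) (by lia) (by lia)
    have hcast : ((p - 1 : ℕ) : ℤ) = p - 1 := by lia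
    rw [hcast, sub_sub, one_add_one_eq_two, sub_add_cancel, qi_self_sub (by lia),
      qi_self_sub (by lia), ← sub_zero (p : ℤ), qi_self_sub (by lia), qi_zero, zero_smul,
      add_zero, qi_one hp, one_smul] at hlast
    exact hlast

end Uqsl2
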